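/- arXiv:2410.19497 — 2 statements merged into one kernel-verified Lean document; each statement's English description precedes it below -/
import Mathlib

section
/- Let W be the real symmetric 3×3 matrix with rows (ψ₂, 0, 0), (0, D_c²·ψ₄, D_c·ψ̄₃), (0, D_c·ψ̄₃, ψ₂ − D_c²·ψ₄). Then the characteristic polynomial of W factors as (X − γ₁)(X − γ₂)(X − γ₃) with γ₁ = ψ₂, γ₂ = (ψ₂ + Δ⁻¹)/2, γ₃ = (ψ₂ − Δ⁻¹)/2; moreover γ₁ > γ₂ > γ₃ > 0. -/
open Real Polynomial

/-!
The first basis vector splits off, leaving a symmetric `2 × 2` block `B` of trace `ψ₂`, whose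
eigenvalues are `(ψ₂ ± δ) / 2` for any `δ` with `δ ^ 2 = B.discr`.

* `δ = Δ⁻¹`: with `z = c - i (x - s)`, the integrals of `1 / |z| ^ 2`, `1 / |z| ^ 4` and
  `(x - s) / |z| ^ 4` combine to that of `1 / z ^ 2`, whose primitive is `-i / z`. The discriminant
  is the squared modulus of the mean of `1 / z ^ 2`, and `Δ` is the product of the distances `|z|`
  from the point `(s, c)` to the two ends of the segment.
* `Δ⁻¹ < ψ₂`: if the segment subtends the angle `φ` at `(s, c)`, then `c` times the integral of
  `1 / |z| ^ 2` is `φ`, while twice the area of the triangle is `2 L c = Δ sin φ`. The claim is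
  `sin φ < φ`.
-/

theorem charpoly_eq_mul_of_column_zero {R : Type*} [CommRing R] {n : ℕ}
    (M : Matrix (Fin (n + 1)) (Fin (n + 1)) R) (hM : ∀ i : Fin n, M i.succ 0 = 0) :
    M.charpoly = (X - C (M 0 0)) * (M.submatrix Fin.succ Fin.succ).charpoly := by
  have hminor : M.charmatrix.submatrix Fin.succ Fin.succ =
      (M.submatrix Fin.succ Fin.succ).charmatrix := by
    ext i j : 1
    simp [Matrix.charmatrix_apply, Matrix.diagonal_apply]
  simp [Matrix.charpoly, Matrix.det_succ_column_zero, Fin.sum_univ_succ,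
    Matrix.charmatrix_apply_ne, hM, hminor]

theorem charpoly_fin_two_eq_mul_of_discr_eq_sq {K : Type*} [Field K] [NeZero (2 : K)]
    (M : Matrix (Fin 2) (Fin 2) K) {δ : K} (hδ : M.discr = δ ^ 2) :
    M.charpoly = (X - C ((M.trace + δ) / 2)) * (X - C ((M.trace - δ) / 2)) := by
  have hsum : (M.trace + δ) / 2 + (M.trace - δ) / 2 = M.trace := by field_simp; ring
  have hprod : (M.trace + δ) / 2 * ((M.trace - δ) / 2) = M.det := by
    rw [Matrix.discr_fin_two] at hδ
    field_simp
    linear_combination hδ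
  rw [Matrix.charpoly_fin_two, ← hprod]
  nth_rw 1 [← hsum]
  rw [C_add, C_mul]
  ring

theorem discr_symm_fin_two {R : Type*} [CommRing R] (x y z : R) :
    !![x, y; y, z].discr = (x - z) ^ 2 + (2 * y) ^ 2 := by
  rw [Matrix.discr_fin_two, Matrix.trace_fin_two_of, Matrix.det_fin_two_of]
  ring

theorem sin_arctan_sub_arctan (x y : ℝ) :
    sin (arctan x - arctan y) = (x - y) / √((1 + x ^ 2) * (1 + y ^ 2)) := by
  rw [sin_sub, sin_arctan, cos_arctan, sin_arctan, cos_arctan, sqrt_mul (by positivity)]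
  field_simp

theorem sq_dist_ends_mul_eq (L D θ : ℝ) :
    ((-L - D * sin θ) ^ 2 + (D * cos θ) ^ 2) * ((L - D * sin θ) ^ 2 + (D * cos θ) ^ 2) =
      (D ^ 2 - L ^ 2) ^ 2 + (2 * L * (D * cos θ)) ^ 2 := by
  have hD_sq : D ^ 2 = (D * sin θ) ^ 2 + (D * cos θ) ^ 2 := by
    linear_combination (-D ^ 2) * sin_sq_add_cos_sq θ
  rw [hD_sq]
  ring

section Integrals

variable {c : ℝ}

theorem hasDerivAt_sub_sq_add_sq (s c x : ℝ) :
    HasDerivAt (fun y ↦ (y - s) ^ 2 + c ^ 2) (2 * (x - s)) x := by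
  simpa using (((hasDerivAt_id x).sub_const s).pow 2).add_const (c ^ 2)

theorem continuous_inv_sub_sq_add_sq (s : ℝ) (hc : c ≠ 0) :
    Continuous fun x ↦ ((x - s) ^ 2 + c ^ 2)⁻¹ :=
  Continuous.inv₀ (by fun_prop) fun x ↦ by positivity

theorem continuous_inv_sub_sq_add_sq_sq (s : ℝ) (hc : c ≠ 0) :
    Continuous fun x ↦ (((x - s) ^ 2 + c ^ 2) ^ 2)⁻¹ :=
  Continuous.inv₀ (by fun_prop) fun x ↦ by positivity

theorem integral_inv_sub_sq_add_sq (a b s : ℝ) (hc : c ≠ 0) :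
    ∫ x in a..b, ((x - s) ^ 2 + c ^ 2)⁻¹ =
      c⁻¹ * (arctan ((b - s) / c) - arctan ((a - s) / c)) := by
  rw [intervalIntegral.integral_comp_sub_right (fun x ↦ (x ^ 2 + c ^ 2)⁻¹) s]
  simp only [add_comm _ (c ^ 2)]
  exact integral_inv_sq_add_sq hc

theorem integral_sub_mul_inv_sq (a b s : ℝ) (hc : c ≠ 0) :
    ∫ x in a..b, (x - s) * (((x - s) ^ 2 + c ^ 2) ^ 2)⁻¹ =
      (((a - s) ^ 2 + c ^ 2)⁻¹ - ((b - s) ^ 2 + c ^ 2)⁻¹) / 2 := by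
  have hderiv (x : ℝ) : HasDerivAt (fun y ↦ -((y - s) ^ 2 + c ^ 2)⁻¹ / 2)
      ((x - s) * (((x - s) ^ 2 + c ^ 2) ^ 2)⁻¹) x := by
    have hx : (x - s) ^ 2 + c ^ 2 ≠ 0 := by positivity
    refine (((hasDerivAt_sub_sq_add_sq s c x).inv hx).neg.div_const 2).congr_deriv ?_
    ring
  have hcont : Continuous fun x ↦ (x - s) * (((x - s) ^ 2 + c ^ 2) ^ 2)⁻¹ :=
    (continuous_sub_right s).mul (continuous_inv_sub_sq_add_sq_sq s hc)
  rw [intervalIntegral.integral_eq_sub_of_hasDerivAt (fun x _ ↦ hderiv x)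
    (hcont.intervalIntegrable a b)]
  ring

theorem two_mul_sq_mul_integral_inv_sq_sub_integral_inv (a b s : ℝ) (hc : c ≠ 0) :
    2 * c ^ 2 * (∫ x in a..b, (((x - s) ^ 2 + c ^ 2) ^ 2)⁻¹)
        - (∫ x in a..b, ((x - s) ^ 2 + c ^ 2)⁻¹) =
      (b - s) / ((b - s) ^ 2 + c ^ 2) - (a - s) / ((a - s) ^ 2 + c ^ 2) := by
  have hderiv (x : ℝ) : HasDerivAt (fun y ↦ (y - s) / ((y - s) ^ 2 + c ^ 2))
      (2 * c ^ 2 * (((x - s) ^ 2 + c ^ 2) ^ 2)⁻¹ - ((x - s) ^ 2 + c ^ 2)⁻¹) x := by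
    have hx : (x - s) ^ 2 + c ^ 2 ≠ 0 := by positivity
    refine (((hasDerivAt_id' x).sub_const s).div (hasDerivAt_sub_sq_add_sq s c x) hx).congr_deriv ?_
    field_simp
    ring
  have hint₂ := (continuous_inv_sub_sq_add_sq s hc).intervalIntegrable
    (μ := MeasureTheory.volume) a b
  have hint₄ := ((continuous_inv_sub_sq_add_sq_sq s hc).intervalIntegrable
    (μ := MeasureTheory.volume) a b).const_mul (2 * c ^ 2)
  rw [← intervalIntegral.integral_const_mul, ← intervalIntegral.integral_sub hint₄ hint₂]
  exact intervalIntegral.integral_eq_sub_of_hasDerivAt (fun x _ ↦ hderiv x) (hint₄.sub hint₂)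

theorem sq_integral_add_sq_integral_eq_sq_div_sqrt (a b s : ℝ) (hc : c ≠ 0) :
    (2 * c ^ 2 * (∫ x in a..b, (((x - s) ^ 2 + c ^ 2) ^ 2)⁻¹)
        - (∫ x in a..b, ((x - s) ^ 2 + c ^ 2)⁻¹)) ^ 2
      + (2 * c * ∫ x in a..b, (x - s) * (((x - s) ^ 2 + c ^ 2) ^ 2)⁻¹) ^ 2 =
    ((b - a) / √(((a - s) ^ 2 + c ^ 2) * ((b - s) ^ 2 + c ^ 2))) ^ 2 := by
  have ha : (a - s) ^ 2 + c ^ 2 ≠ 0 := by positivity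
  have hb : (b - s) ^ 2 + c ^ 2 ≠ 0 := by positivity
  rw [two_mul_sq_mul_integral_inv_sq_sub_integral_inv a b s hc, integral_sub_mul_inv_sq a b s hc,
    div_pow, sq_sqrt (by positivity)]
  field_simp
  ring

theorem div_sqrt_lt_integral_inv_sub_sq_add_sq {a b : ℝ} (s : ℝ) (hab : a < b) (hc : c ≠ 0) :
    (b - a) / √(((a - s) ^ 2 + c ^ 2) * ((b - s) ^ 2 + c ^ 2)) <
      ∫ x in a..b, ((x - s) ^ 2 + c ^ 2)⁻¹ := by
  wlog hpos : 0 < c generalizing c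
  · simpa only [neg_sq] using
      this (neg_ne_zero.2 hc) (neg_pos.2 (lt_of_le_of_ne (not_lt.1 hpos) hc))
  set φ := arctan ((b - s) / c) - arctan ((a - s) / c) with hφ
  have hφ_pos : 0 < φ := sub_pos.2 (arctan_strictMono (by gcongr))
  have hsqrt : √((1 + ((b - s) / c) ^ 2) * (1 + ((a - s) / c) ^ 2)) =
      √(((a - s) ^ 2 + c ^ 2) * ((b - s) ^ 2 + c ^ 2)) / c ^ 2 := by
    rw [eq_div_iff (by positivity), ← sqrt_sq (sq_nonneg c), ← sqrt_mul (by positivity),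
      sqrt_sq (sq_nonneg c)]
    congr 1
    field_simp
    ring
  calc (b - a) / √(((a - s) ^ 2 + c ^ 2) * ((b - s) ^ 2 + c ^ 2))
      = c⁻¹ * sin φ := by
        rw [hφ, sin_arctan_sub_arctan, hsqrt]
        field_simp
        ring
    _ < c⁻¹ * φ := by gcongr; exact sin_lt hφ_pos
    _ = ∫ x in a..b, ((x - s) ^ 2 + c ^ 2)⁻¹ := (integral_inv_sub_sq_add_sq a b s hc).symm

end Integrals

theorem charpoly_W3x3 (L D θ : ℝ) (hL : 0 < L) (hD : 0 < D)
    (hθ : θ ∈ Set.Ioo (-(π / 2)) (π / 2))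
    (Ds Dc ψ₂ ψ₄ ψ₃' Δ γ₁ γ₂ γ₃ : ℝ)
    (hDs : Ds = D * sin θ) (hDc : Dc = D * cos θ)
    (hψ₂ : ψ₂ = (1 / (2 * L)) * ∫ x in (-L)..L, ((x - Ds) ^ 2 + Dc ^ 2)⁻¹)
    (hψ₄ : ψ₄ = (1 / (2 * L)) * ∫ x in (-L)..L, (((x - Ds) ^ 2 + Dc ^ 2) ^ 2)⁻¹)
    (hψ₃' : ψ₃' = (1 / (2 * L)) * ∫ x in (-L)..L, (x - Ds) * (((x - Ds) ^ 2 + Dc ^ 2) ^ 2)⁻¹)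
    (hΔ : Δ = Real.sqrt ((D ^ 2 - L ^ 2) ^ 2 + (2 * L * Dc) ^ 2))
    (hγ₁ : γ₁ = ψ₂) (hγ₂ : γ₂ = (ψ₂ + Δ⁻¹) / 2) (hγ₃ : γ₃ = (ψ₂ - Δ⁻¹) / 2)
    (W : Matrix (Fin 3) (Fin 3) ℝ)
    (hW : W = !![ψ₂, 0, 0; 0, Dc ^ 2 * ψ₄, Dc * ψ₃'; 0, Dc * ψ₃', ψ₂ - Dc ^ 2 * ψ₄]) :
    W.charpoly = (X - C γ₁) * (X - C γ₂) * (X - C γ₃) ∧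
      γ₁ > γ₂ ∧ γ₂ > γ₃ ∧ γ₃ > 0 := by
  have hDc₀ : Dc ≠ 0 := hDc ▸ (mul_pos hD (cos_pos_of_mem_Ioo hθ)).ne'
  have hΔ_ends : Δ = √(((-L - Ds) ^ 2 + Dc ^ 2) * ((L - Ds) ^ 2 + Dc ^ 2)) := by
    rw [hΔ, hDs, hDc, sq_dist_ends_mul_eq]
  have hΔ_pos : 0 < Δ⁻¹ := by rw [hΔ_ends]; positivity
  have hΔ_lt : Δ⁻¹ < ψ₂ := by
    have hmean := div_sqrt_lt_integral_inv_sub_sq_add_sq Ds (neg_lt_self hL) hDc₀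
    rwa [← hΔ_ends, sub_neg_eq_add, ← two_mul, div_eq_mul_inv, ← lt_inv_mul_iff₀ (by positivity),
      ← one_div (2 * L), ← hψ₂] at hmean
  set B := !![Dc ^ 2 * ψ₄, Dc * ψ₃'; Dc * ψ₃', ψ₂ - Dc ^ 2 * ψ₄] with hB
  have htrace : B.trace = ψ₂ := by rw [hB, Matrix.trace_fin_two_of]; ring
  have hdiscr : B.discr = Δ⁻¹ ^ 2 := by
    have hsq := sq_integral_add_sq_integral_eq_sq_div_sqrt (-L) L Ds hDc₀
    rw [← hΔ_ends] at hsq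
    rw [hB, discr_symm_fin_two, hψ₂, hψ₃', hψ₄]
    field_simp at hsq ⊢
    linear_combination hsq
  have hminor : W.submatrix Fin.succ Fin.succ = B := by
    ext i j; fin_cases i <;> fin_cases j <;> simp [hW, hB]
  refine ⟨?_, by linarith, by linarith, by linarith⟩
  rw [charpoly_eq_mul_of_column_zero W (by simp [hW, Fin.forall_fin_two]), hminor,
    charpoly_fin_two_eq_mul_of_discr_eq_sq B hdiscr, htrace, hγ₁, hγ₂, hγ₃, mul_assoc]
  simp [hW]
end

section
/- Fix θ ∈ (−π/2, π/2). Then ψ₂(ε) − [1 + (1 − (4/3)·cos²θ)·ε²] = O(ε⁴) as ε → 0⁺. -/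
open Real Filter Asymptotics Topology

noncomputable def ψ₂ (θ ε : ℝ) : ℝ :=
  (1 / (2 * ε)) * ∫ x in (-ε)..ε, ((x - sin θ) ^ 2 + cos θ ^ 2)⁻¹

/-!
The integrand is `(1 - 2 x sin θ + x²)⁻¹`, the generating function of the Chebyshev polynomials of
the second kind at `sin θ`, so near `0` it is `∑ Uₖ(sin θ) xᵏ`. Averaging over `(-ε, ε)` kills the
odd powers and divides the coefficient of `x²ᵏ` by `2 k + 1`, while an error `O(xⁿ)` remains
`O(εⁿ)`. The coefficient of `ε²` is thus `U₂(sin θ) / 3 = (4 sin² θ - 1) / 3`.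
-/

open Finset MeasureTheory Polynomial.Chebyshev

theorem eventually_intervalIntegrable_of_integrableAtFilter {ι E : Type*} [NormedAddCommGroup E]
    {f : ℝ → E} {μ : Measure ℝ} {c : ℝ} {l : Filter ι} {u v : ι → ℝ}
    (hf : IntegrableAtFilter f (𝓝 c) μ) (hu : Tendsto u l (𝓝 c)) (hv : Tendsto v l (𝓝 c)) :
    ∀ᶠ t in l, IntervalIntegrable f μ (u t) (v t) :=
  ((hu.Ioc hv).eventually hf.eventually).and ((hv.Ioc hu).eventually hf.eventually)

section SymmetricAverage

theorem average_neg_self_even_pow {ε : ℝ} (hε : ε ≠ 0) (k : ℕ) :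
    ⨍ x in -ε..ε, x ^ (2 * k) = ε ^ (2 * k) / (2 * k + 1) := by
  rw [interval_average_eq_div, integral_pow, (odd_two_mul_add_one k).neg_pow]
  push_cast
  field_simp
  ring

theorem average_neg_self_odd_pow (ε : ℝ) (k : ℕ) : ⨍ x in -ε..ε, x ^ (2 * k + 1) = 0 := by
  have hk : Even (2 * k + 1 + 1) := ⟨k + 1, by ring⟩
  rw [interval_average_eq_div, integral_pow, hk.neg_pow, sub_self, zero_div, zero_div]

variable {E : Type*} [NormedAddCommGroup E] [NormedSpace ℝ E]

theorem average_neg_self_sum_pow_smul [CompleteSpace E] {ε : ℝ} (hε : ε ≠ 0) (a : ℕ → E) (n : ℕ) :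
    ⨍ x in -ε..ε, ∑ k ∈ range (2 * n), x ^ k • a k =
      ∑ k ∈ range n, (ε ^ (2 * k) / (2 * k + 1)) • a (2 * k) := by
  have average_pow_smul (k : ℕ) :
      (ε - -ε)⁻¹ • ∫ x in -ε..ε, x ^ k • a k = (⨍ x in -ε..ε, x ^ k) • a k := by
    rw [intervalIntegral.integral_smul_const, interval_average_eq, smul_assoc]
  rw [interval_average_eq, intervalIntegral.integral_finsetSum
    fun k _ ↦ Continuous.intervalIntegrable (by fun_prop) _ _, smul_sum]
  simp only [average_pow_smul]
  induction n with
  | zero => simp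
  | succ n ih =>
    rw [Nat.mul_succ, sum_range_succ, sum_range_succ, sum_range_succ, ih,
      average_neg_self_even_pow hε, average_neg_self_odd_pow, zero_smul, add_zero]

theorem isBigO_average_neg_self {g : ℝ → E} {n : ℕ} (hg : g =O[𝓝 0] (· ^ n)) :
    (fun ε ↦ ⨍ x in -ε..ε, g x) =O[𝓝 0] (· ^ n) := by
  obtain ⟨C, hC₀, hC⟩ := hg.exists_nonneg
  obtain ⟨δ, hδ, hball⟩ := Metric.eventually_nhds_iff.1 hC.bound
  refine .of_bound C (Metric.eventually_nhds_iff.2 ⟨δ, hδ, fun ε hε ↦ ?_⟩)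
  rw [dist_zero_right] at hε
  have hbound : ∀ x ∈ Set.uIoc (-ε) ε, ‖g x‖ ≤ C * ‖ε ^ n‖ := fun x hx ↦ by
    have hxε : ‖x‖ ≤ ‖ε‖ := by
      simp only [Real.norm_eq_abs]
      grind [Set.mem_uIoc]
    calc ‖g x‖ ≤ C * ‖x ^ n‖ := hball (dist_zero_right x ▸ hxε.trans_lt hε)
      _ ≤ C * ‖ε ^ n‖ := by rw [norm_pow, norm_pow]; gcongr
  calc ‖⨍ x in -ε..ε, g x‖
    _ = |ε - -ε|⁻¹ * ‖∫ x in -ε..ε, g x‖ := by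
      rw [interval_average_eq, norm_smul, norm_inv, Real.norm_eq_abs]
    _ ≤ |ε - -ε|⁻¹ * (C * ‖ε ^ n‖ * |ε - -ε|) := by
      gcongr
      exact intervalIntegral.norm_integral_le_of_norm_le_const hbound
    _ ≤ C * ‖ε ^ n‖ := by
      rw [mul_comm, mul_assoc]
      exact mul_le_of_le_one_right (by positivity) mul_inv_le_one

theorem isBigO_average_neg_self_sub_sum [CompleteSpace E] {f : ℝ → E} {a : ℕ → E} {n : ℕ}
    (hfm : StronglyMeasurableAtFilter f (𝓝 0))
    (hf : (fun x ↦ f x - ∑ k ∈ range (2 * n), x ^ k • a k) =O[𝓝 0] (· ^ (2 * n))) :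
    (fun ε ↦ (⨍ x in -ε..ε, f x) - ∑ k ∈ range n, (ε ^ (2 * k) / (2 * k + 1)) • a (2 * k))
      =O[𝓝[≠] 0] (· ^ (2 * n)) := by
  set p : ℝ → E := fun x ↦ ∑ k ∈ range (2 * n), x ^ k • a k
  have hp : Continuous p := by fun_prop
  have hpow : Continuous fun x : ℝ ↦ x ^ (2 * n) := by fun_prop
  have hfO : f =O[𝓝 0] fun _ ↦ (1 : ℝ) :=
    ((hf.trans (hpow.continuousAt.isBigO_one ℝ)).add (hp.continuousAt.isBigO_one ℝ)).congr_left
      fun _ ↦ sub_add_cancel _ _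
  have hfi : IntegrableAtFilter f (𝓝 0) :=
    hfO.integrableAtFilter hfm (continuous_const.integrableAt_nhds 0)
  have hneg : Tendsto (fun ε : ℝ ↦ -ε) (𝓝 0) (𝓝 0) := by simpa using tendsto_neg (0 : ℝ)
  have hfii : ∀ᶠ ε in 𝓝 0, IntervalIntegrable f volume (-ε) ε :=
    eventually_intervalIntegrable_of_integrableAtFilter hfi hneg tendsto_id
  refine ((isBigO_average_neg_self hf).mono nhdsWithin_le_nhds).congr' ?_ .rfl
  filter_upwards [hfii.filter_mono nhdsWithin_le_nhds, self_mem_nhdsWithin] with ε hfε hε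
  rw [← average_neg_self_sum_pow_smul hε]
  simp only [interval_average_eq]
  rw [intervalIntegral.integral_sub hfε (hp.intervalIntegrable _ _), smul_sub]

end SymmetricAverage

theorem one_sub_two_mul_add_sq_mul_sum_chebyshevU {R : Type*} [CommRing R] (s x : R) (n : ℕ) :
    (1 - 2 * s * x + x ^ 2) * ∑ k ∈ range n, (U R k).eval s * x ^ k =
      1 - (U R n).eval s * x ^ n + (U R (n - 1)).eval s * x ^ (n + 1) := by
  induction n with
  | zero => simp
  | succ n ih =>
    rw [sum_range_succ, mul_add, ih]
    push_cast
    rw [U_add_one, add_sub_cancel_right]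
    simp only [Polynomial.eval_sub, Polynomial.eval_mul, Polynomial.eval_ofNat, Polynomial.eval_X]
    ring

theorem isBigO_inv_sub_sum_chebyshevU (s : ℝ) (n : ℕ) :
    (fun x : ℝ ↦ (1 - 2 * s * x + x ^ 2)⁻¹ - ∑ k ∈ range n, (U ℝ k).eval s * x ^ k)
      =O[𝓝 0] (· ^ n) := by
  set q : ℝ → ℝ := fun x ↦ 1 - 2 * s * x + x ^ 2
  have hq : Continuous q := by fun_prop
  have hq₀ : q 0 ≠ 0 := by simp [q]
  have hremainder : ∀ᶠ x in 𝓝 0,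
      (q x)⁻¹ * ((U ℝ n).eval s - (U ℝ (n - 1)).eval s * x) * x ^ n =
        (q x)⁻¹ - ∑ k ∈ range n, (U ℝ k).eval s * x ^ k := by
    filter_upwards [hq.continuousAt.eventually_ne hq₀] with x hx
    rw [eq_sub_iff_add_eq, ← mul_right_inj' hx, mul_add,
      one_sub_two_mul_add_sq_mul_sum_chebyshevU]
    field_simp
    ring
  have hcont : ContinuousAt
      (fun x ↦ (q x)⁻¹ * ((U ℝ n).eval s - (U ℝ (n - 1)).eval s * x)) 0 := by
    fun_prop (disch := exact hq₀)
  simpa using ((hcont.isBigO_one ℝ).mul (isBigO_refl (· ^ n) (𝓝 0))).congr' hremainder (by simp)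

theorem psi2_eq_average (θ ε : ℝ) :
    ψ₂ θ ε = ⨍ x in -ε..ε, (1 - 2 * sin θ * x + x ^ 2)⁻¹ := by
  have hden (x : ℝ) : (x - sin θ) ^ 2 + cos θ ^ 2 = 1 - 2 * sin θ * x + x ^ 2 := by
    linear_combination sin_sq_add_cos_sq θ
  simp only [ψ₂, hden, interval_average_eq, smul_eq_mul, sub_neg_eq_add, ← two_mul, one_div]

theorem isBigO_psi2_sub_sum_chebyshevU (θ : ℝ) (n : ℕ) :
    (fun ε ↦ ψ₂ θ ε - ∑ k ∈ range n, ε ^ (2 * k) / (2 * k + 1) * (U ℝ (2 * k)).eval (sin θ))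
      =O[𝓝[≠] 0] (· ^ (2 * n)) := by
  have hmeas : Measurable fun x : ℝ ↦ (1 - 2 * sin θ * x + x ^ 2)⁻¹ := by fun_prop
  have h := isBigO_inv_sub_sum_chebyshevU (sin θ) (2 * n)
  simp only [mul_comm (Polynomial.eval _ _)] at h
  simpa [psi2_eq_average] using isBigO_average_neg_self_sub_sum
    hmeas.stronglyMeasurable.stronglyMeasurableAtFilter h

theorem psi2_taylor_general (θ : ℝ) :
    (fun ε : ℝ => ψ₂ θ ε - (1 + (1 - (4 / 3) * cos θ ^ 2) * ε ^ 2))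
      =O[𝓝[≠] (0 : ℝ)] fun ε => ε ^ 4 := by
  have hU₂ : (U ℝ 2).eval (sin θ) = 3 - 4 * cos θ ^ 2 := by
    simp only [U_two, Polynomial.eval_sub, Polynomial.eval_mul, Polynomial.eval_ofNat,
      Polynomial.eval_pow, Polynomial.eval_X, Polynomial.eval_one]
    linear_combination 4 * sin_sq_add_cos_sq θ
  refine (isBigO_psi2_sub_sum_chebyshevU θ 2).congr_left fun ε ↦ ?_
  simp only [sum_range_succ, range_zero, sum_empty, Nat.cast_zero, Nat.cast_one, mul_zero, mul_one,
    U_zero, Polynomial.eval_one, hU₂]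
  ring

theorem psi2_taylor (θ : ℝ) (hθ : θ ∈ Set.Ioo (-(π / 2)) (π / 2)) :
    (fun ε : ℝ => ψ₂ θ ε - (1 + (1 - (4 / 3) * cos θ ^ 2) * ε ^ 2))
      =O[𝓝[>] (0 : ℝ)] fun ε => ε ^ 4 :=
  (psi2_taylor_general θ).mono (nhdsGT_le_nhdsNE 0)
end
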